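/- arXiv:2506.18393 — 5 statements merged into one kernel-verified Lean document; each statement's English description precedes it below -/
import Mathlib

section
/- Let M=(Q,V,δ,q₀,F) be a DFAwtl, and suppose there are a state q, letters a,b∈V, a state s and words x∈V*, y,z∈V* and f∈F such that δ(q,a) is undefined, δ(q,b)=s, (s,ax)→*(q,ε), (q₀,y)→*(q,ε) and (q,z)→*(f,ε). Then for every n≥1 the word w_n = y(abx)ⁿz belongs to L(M) and jc_M(w_n) ≥ n; consequently JC_M is not constant-bounded. -/
/-- A deterministic finite automaton with translucent letters (DFAwtl):
`delta` is a partial transition function, `start` the initial state,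
`accept` the set of final states. -/
structure DFAwtl (Q V : Type*) where
  delta : Q → V → Option Q
  start : Q
  accept : Set Q

namespace DFAwtl

variable {Q V : Type*}

/-- Sequential step: `(s, a·y) → (p, y)` when `δ(s,a) = p`. -/
def SeqStep (M : DFAwtl Q V) (c c' : Q × List V) : Prop :=
  ∃ a : V, c.2 = a :: c'.2 ∧ M.delta c.1 a = some c'.1

/-- Jumping step: `(s, x·a·y) ↻ (p, x·y)` when `x ≠ ε`, `δ(s,a) = p`, and
`δ(s,b)` is undefined for every letter `b` occurring in `x`. -/
def JumpStep (M : DFAwtl Q V) (c c' : Q × List V) : Prop :=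
  ∃ (x y : List V) (a : V), x ≠ [] ∧ c.2 = x ++ a :: y ∧ c'.2 = x ++ y ∧
    M.delta c.1 a = some c'.1 ∧ ∀ b ∈ x, M.delta c.1 b = none

/-- Either a sequential or a jumping step. -/
def Step (M : DFAwtl Q V) (c c' : Q × List V) : Prop :=
  M.SeqStep c c' ∨ M.JumpStep c c'

/-- Reflexive–transitive closure of sequential steps (the relation `→*`). -/
def SeqSteps (M : DFAwtl Q V) : Q × List V → Q × List V → Prop :=
  Relation.ReflTransGen M.SeqStep

/-- Reflexive–transitive closure of all steps (the relation `⊨*`). -/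
def Steps (M : DFAwtl Q V) : Q × List V → Q × List V → Prop :=
  Relation.ReflTransGen M.Step

/-- `StepsN M c c' k` : configuration `c'` is reachable from `c` by a computation
containing exactly `k` jumping steps. -/
inductive StepsN (M : DFAwtl Q V) : Q × List V → Q × List V → ℕ → Prop
  | refl (c : Q × List V) : StepsN M c c 0
  | seq {c c' c'' : Q × List V} {n : ℕ} :
      M.SeqStep c c' → StepsN M c' c'' n → StepsN M c c'' n
  | jump {c c' c'' : Q × List V} {n : ℕ} :
      M.JumpStep c c' → StepsN M c' c'' n → StepsN M c c'' (n + 1)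

/-- The language accepted by `M`. -/
def lang (M : DFAwtl Q V) : Set (List V) :=
  {w | ∃ f ∈ M.accept, M.Steps (M.start, w) (f, [])}

/-- `M` accepts `w` by a computation with exactly `k` jumping steps. -/
def AcceptsIn (M : DFAwtl Q V) (w : List V) (k : ℕ) : Prop :=
  ∃ f ∈ M.accept, M.StepsN (M.start, w) (f, []) k

/-- The jump complexity of a word: the (for a deterministic machine, unique)
number of jumping steps in an accepting computation on `w`. -/
noncomputable def jc (M : DFAwtl Q V) (w : List V) : ℕ :=
  sInf {k | M.AcceptsIn w k}

/-- The jump complexity function: the maximal number of jumps over accepted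
words of length `n`. -/
noncomputable def JC (M : DFAwtl Q V) (n : ℕ) : ℕ :=
  sSup {k | ∃ w ∈ M.lang, w.length = n ∧ M.jc w = k}

/-- `JC_M` is bounded by a constant. -/
def ConstBounded (M : DFAwtl Q V) : Prop :=
  ∃ c : ℕ, ∀ w ∈ M.lang, M.jc w ≤ c

/-- Extended (sequential) transition function on words. -/
def deltaStar (M : DFAwtl Q V) (q : Q) (w : List V) : Option Q :=
  w.foldl (fun o a => o.bind fun p => M.delta p a) (some q)

/-- A state `q` is `a`-deficient if `δ(q,a)` is undefined. -/
def Deficient (M : DFAwtl Q V) (q : Q) (a : V) : Prop :=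
  M.delta q a = none

/-- The set `⟨q,a⟩` (empty when `δ(q,a)` is defined). -/
def angleSet (M : DFAwtl Q V) (q : Q) (a : V) : Set Q :=
  {s | M.delta q a = none ∧ ∃ x : List V, x ≠ [] ∧
    M.SeqSteps (q, x) (s, []) ∧ M.Steps (s, a :: x) (q, [])}

/-- The set `[q,a]` (empty when `δ(q,a)` is defined). -/
def bracketSet (M : DFAwtl Q V) (q : Q) (a : V) : Set Q :=
  {s | M.delta q a = none ∧ ∃ x : List V, x ≠ [] ∧
    M.SeqSteps (q, x) (s, []) ∧ M.SeqSteps (s, a :: x) (q, [])}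

/-- Every state of the automaton is useful. -/
def AllUseful (M : DFAwtl Q V) : Prop :=
  ∀ q : Q, (∃ x : List V, M.SeqSteps (M.start, x) (q, [])) ∧
    (∃ (y : List V) (f : Q), f ∈ M.accept ∧ M.SeqSteps ((q : Q), y) (f, []))

/-- `δ(q,x')` is `a`-deficient for every prefix `x'` of `x`. -/
def PrefixDeficient (M : DFAwtl Q V) (q : Q) (a : V) (x : List V) : Prop :=
  ∀ x' : List V, ∀ p : Q, x' <+: x → M.deltaStar q x' = some p → M.delta p a = none

/-- `δ(q,y')` is `a`-deficient for every proper prefix `y'` of `y`. -/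
def ProperPrefixDeficient (M : DFAwtl Q V) (q : Q) (a : V) (y : List V) : Prop :=
  ∀ y' : List V, ∀ p : Q, y' <+: y → y' ≠ y → M.deltaStar q y' = some p → M.delta p a = none

/-- The condition of Claim 2: a pair `(q,a)` with `δ(q,a)` undefined, a nonempty
cycle in `q` visiting only `a`-deficient states, and an accepting path from `q`
reading a word `y` without `a` through `a`-deficient states and then an `a`. -/
def ClaimTwoCondition (M : DFAwtl Q V) (q : Q) (a : V) : Prop :=
  M.delta q a = none ∧
  (∃ x : List V, x ≠ [] ∧ M.SeqSteps (q, x) (q, []) ∧ M.PrefixDeficient q a x) ∧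
  (∃ (y z : List V) (f : Q), a ∉ y ∧ f ∈ M.accept ∧
    M.SeqSteps (q, y ++ a :: z) (f, []) ∧ M.ProperPrefixDeficient q a y)

end DFAwtl

namespace DFAwtl

variable {Q V : Type*}

/-- `p 0, p 1, …, p n = p 0` is a circuit in the transition graph of `M`,
with the `i`-th edge labelled by the letter `a i`. -/
def IsCircuit (M : DFAwtl Q V) (n : ℕ) (p : ℕ → Q) (a : ℕ → V) : Prop :=
  0 < n ∧ p n = p 0 ∧ ∀ i < n, M.delta (p i) (a i) = some (p (i + 1))

/-- The circuit is `x`-jumping: every state of the circuit from which an `x` is read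
is `b`-deficient for some letter `b`, and at least one edge is labelled by a letter
other than `x`. -/
def IsXJumpingCircuit (M : DFAwtl Q V) (n : ℕ) (p : ℕ → Q) (a : ℕ → V) (x : V) : Prop :=
  M.IsCircuit n p a ∧ (∀ i < n, a i = x → ∃ b : V, M.delta (p i) b = none) ∧
    ∃ i < n, a i ≠ x

/-- The state `q` is reachable from the initial state. -/
def ReachableState (M : DFAwtl Q V) (q : Q) : Prop :=
  ∃ u : List V, M.Steps (M.start, u) (q, [])

end DFAwtl
-- end preamble

theorem DFAwtl.aux_split {Q V : Type*} (M : DFAwtl Q V) (p : Q) (a a' : V) (y y' : List V)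
    (h1 : M.delta p a ≠ none) (h2 : M.delta p a' ≠ none) :
    ∀ x x' : List V, (∀ b ∈ x, M.delta p b = none) → (∀ b ∈ x', M.delta p b = none) →
      x ++ a :: y = x' ++ a' :: y' → x = x' ∧ a = a' ∧ y = y' := by
  intro x
  induction x with
  | nil =>
    intro x' _ hx' h
    cases x' with
    | nil => simpa using h
    | cons c t =>
      simp only [List.nil_append, List.cons_append, List.cons.injEq] at h
      exact absurd (hx' c (by simp)) (h.1 ▸ h1)
  | cons d t ih =>
    intro x' hx hx' h
    cases x' with
    | nil =>
      simp only [List.nil_append, List.cons_append, List.cons.injEq] at h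
      exact absurd (hx d (by simp)) (h.1 ▸ h2)
    | cons c t' =>
      simp only [List.cons_append, List.cons.injEq] at h
      obtain ⟨e1, e2, e3⟩ := ih t' (fun b hb => hx b (by simp [hb]))
        (fun b hb => hx' b (by simp [hb])) h.2
      exact ⟨by rw [h.1, e1], e2, e3⟩

theorem DFAwtl.aux_seq_seq {Q V : Type*} (M : DFAwtl Q V) {c c1 c2 : Q × List V}
    (h1 : M.SeqStep c c1) (h2 : M.SeqStep c c2) : c1 = c2 := by
  obtain ⟨a, e1, d1⟩ := h1
  obtain ⟨a', e2, d2⟩ := h2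
  rw [e1] at e2
  injection e2 with e3 e4
  subst e3
  rw [d1] at d2
  injection d2 with d3
  exact Prod.ext d3 e4

theorem DFAwtl.aux_seq_jump {Q V : Type*} (M : DFAwtl Q V) {c c1 c2 : Q × List V}
    (h1 : M.SeqStep c c1) (h2 : M.JumpStep c c2) : False := by
  obtain ⟨a, e1, d1⟩ := h1
  obtain ⟨x, y, a', hx, e2, _, d2, hn⟩ := h2
  have := M.aux_split c.1 a a' c1.2 y (by simp [d1]) (by simp [d2]) [] x (by simp) hn
    (by rw [← e2, e1]; rfl)
  exact hx this.1.symm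

theorem DFAwtl.aux_jump_jump {Q V : Type*} (M : DFAwtl Q V) {c c1 c2 : Q × List V}
    (h1 : M.JumpStep c c1) (h2 : M.JumpStep c c2) : c1 = c2 := by
  obtain ⟨x, y, a, _, e1, f1, d1, hn1⟩ := h1
  obtain ⟨x', y', a', _, e2, f2, d2, hn2⟩ := h2
  obtain ⟨r1, r2, r3⟩ := M.aux_split c.1 a a' y y' (by simp [d1]) (by simp [d2]) x x' hn1 hn2
    (by rw [← e2, e1])
  subst r1 r2 r3
  rw [d1] at d2
  injection d2 with d3
  exact Prod.ext d3 (by rw [f1, f2])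

theorem DFAwtl.aux_unique {Q V : Type*} (M : DFAwtl Q V) {c e : Q × List V} {k : ℕ}
    (h : M.StepsN c e k) : e.2 = [] → ∀ (e' : Q × List V) (k' : ℕ), e'.2 = [] →
      M.StepsN c e' k' → k = k' := by
  induction h with
  | refl c =>
    intro he e' k' he' h'
    cases h' with
    | refl => rfl
    | seq hs _ => obtain ⟨a, h1, _⟩ := hs; simp [he] at h1
    | jump hj _ => obtain ⟨x, y, a, _, h1, _⟩ := hj; simp [he] at h1
  | seq hs _ ih =>
    intro he e' k' he' h'
    cases h' with
    | refl => obtain ⟨a, h1, _⟩ := hs; simp [he'] at h1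
    | seq hs' h'' =>
      have := M.aux_seq_seq hs hs'
      subst this
      exact ih he e' _ he' h''
    | jump hj _ => exact (M.aux_seq_jump hs hj).elim
  | jump hj _ ih =>
    intro he e' k' he' h'
    cases h' with
    | refl => obtain ⟨x, y, a, _, h1, _⟩ := hj; simp [he'] at h1
    | seq hs' h'' => exact (M.aux_seq_jump hs' hj).elim
    | jump hj' h'' =>
      have := M.aux_jump_jump hj hj'
      subst this
      rw [ih he e' _ he' h'']

theorem DFAwtl.aux_steps {Q V : Type*} (M : DFAwtl Q V) {c e : Q × List V} {k : ℕ}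
    (h : M.StepsN c e k) : M.Steps c e := by
  induction h with
  | refl c => exact Relation.ReflTransGen.refl
  | seq hs _ ih => exact Relation.ReflTransGen.head (Or.inl hs) ih
  | jump hs _ ih => exact Relation.ReflTransGen.head (Or.inr hs) ih

theorem DFAwtl.aux_prepend {Q V : Type*} (M : DFAwtl Q V) {c d : Q × List V}
    (h : M.SeqSteps c d) (w : List V) (e : Q × List V) (k : ℕ)
    (h2 : M.StepsN (d.1, d.2 ++ w) e k) : M.StepsN (c.1, c.2 ++ w) e k := by
  unfold DFAwtl.SeqSteps at h
  induction h using Relation.ReflTransGen.head_induction_on with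
  | refl => exact h2
  | head hs _ ih =>
    refine DFAwtl.StepsN.seq ?_ ih
    obtain ⟨a, h1, h3⟩ := hs
    exact ⟨a, by simp [h1], h3⟩


/-- Claim 1: if `δ(q,a)` is undefined, `δ(q,b) = s`, `(s,ax) →* (q,ε)`,
`(q₀,y) →* (q,ε)` and `(q,z) →* (f,ε)` with `f` final, then for every `n ≥ 1` the word
`w_n = y(abx)ⁿz` is accepted with at least `n` jumps; hence `JC_M` is not
constant-bounded. -/
theorem stmt_2 {Q V : Type*} [Fintype Q] [Fintype V] (M : DFAwtl Q V)
    (q s f : Q) (a b : V) (x y z : List V)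
    (ha : M.delta q a = none) (hb : M.delta q b = some s)
    (hs : M.SeqSteps (s, a :: x) (q, []))
    (hy : M.SeqSteps (M.start, y) (q, []))
    (hz : M.SeqSteps (q, z) (f, [])) (hf : f ∈ M.accept) :
    (∀ n : ℕ, 1 ≤ n →
      y ++ (List.replicate n (a :: b :: x)).flatten ++ z ∈ M.lang ∧
        n ≤ M.jc (y ++ (List.replicate n (a :: b :: x)).flatten ++ z)) ∧
      ¬ M.ConstBounded := by
  have key : ∀ n : ℕ, M.StepsN (q, (List.replicate n (a :: b :: x)).flatten ++ z) (f, []) n := by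
    intro n
    induction n with
    | zero =>
      have := M.aux_prepend hz [] (f, []) 0 (DFAwtl.StepsN.refl _)
      simpa using this
    | succ n ih =>
      have h1 := M.aux_prepend hs ((List.replicate n (a :: b :: x)).flatten ++ z) (f, []) n
        (by simpa using ih)
      refine DFAwtl.StepsN.jump ?_ h1
      refine ⟨[a], x ++ ((List.replicate n (a :: b :: x)).flatten ++ z), b, by simp, ?_, ?_, hb, ?_⟩
      · simp [List.replicate_succ]
      · simp
      · simpa using ha
  have main : ∀ n : ℕ, y ++ (List.replicate n (a :: b :: x)).flatten ++ z ∈ M.lang ∧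
        n ≤ M.jc (y ++ (List.replicate n (a :: b :: x)).flatten ++ z) := by
    intro n
    have h1 := M.aux_prepend hy ((List.replicate n (a :: b :: x)).flatten ++ z) (f, []) n
      (by simpa using key n)
    rw [List.append_assoc]
    refine ⟨⟨f, hf, M.aux_steps h1⟩, ?_⟩
    refine le_csInf ⟨n, f, hf, h1⟩ ?_
    rintro k ⟨f', _, hk⟩
    exact (M.aux_unique h1 rfl _ _ rfl hk).le
  refine ⟨fun n _ => main n, ?_⟩
  rintro ⟨c, hc⟩
  have := hc _ (main (c + 1)).1
  have := (main (c + 1)).2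
  omega
end

section
/- Let M=(Q,V,δ,q₀,F) be a DFAwtl, and suppose there are a state q and a letter a∈V such that: δ(q,a) is undefined; q is reachable, i.e., (q₀,u)⊨*(q,ε) for some word u; there is x∈V⁺ with (q,x)→*(q,ε) such that the state δ(q,x′) is a-deficient for every prefix x′ of x; and there are words y∈(V∖{a})* and z∈V* and a final state f∈F with (q,yaz)→*(f,ε) such that the state δ(q,y′) is a-deficient for every proper prefix y′ of y. Then for every n≥1 the word u·a·xⁿ·y·z belongs to L(M) and is accepted with at least n jumps; consequently JC_M is not constant-bounded (indeed linear in the input length along this family of words). -/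
-- end preamble


namespace DFAwtl

variable {Q V : Type*}

theorem aux_seq_cons {M : DFAwtl Q V} {p r : Q} {b : V} {w : List V}
    (h : M.SeqSteps (p, b :: w) (r, [])) :
    ∃ s, M.delta p b = some s ∧ M.SeqSteps (s, w) (r, []) := by
  rcases Relation.ReflTransGen.cases_head h with h | ⟨⟨s, v⟩, ⟨c, h1, h2⟩, h3⟩
  · simp at h
  · simp only [List.cons.injEq] at h1
    obtain ⟨rfl, rfl⟩ := h1
    exact ⟨s, h2, h3⟩

theorem aux_seq_append {M : DFAwtl Q V} {r : Q} {w : List V} (y : List V) : ∀ {p : Q},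
    M.SeqSteps (p, y ++ w) (r, []) →
    ∃ s, M.SeqSteps (p, y) (s, []) ∧ M.SeqSteps (s, w) (r, []) := by
  induction y with
  | nil => intro p h; exact ⟨p, Relation.ReflTransGen.refl, h⟩
  | cons b y ih =>
    intro p h
    obtain ⟨s, hs, h⟩ := aux_seq_cons h
    obtain ⟨t, h1, h2⟩ := ih h
    exact ⟨t, Relation.ReflTransGen.head ⟨b, rfl, hs⟩ h1, h2⟩

theorem aux_trans {M : DFAwtl Q V} {c d e : Q × List V} {k l : ℕ}
    (h : M.StepsN c d k) (h' : M.StepsN d e l) : M.StepsN c e (k + l) := by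
  induction h with
  | refl c => simpa using h'
  | seq h1 _ ih => exact StepsN.seq h1 (ih h')
  | jump h1 _ ih =>
    have := StepsN.jump h1 (ih h')
    rwa [Nat.add_right_comm] at this

theorem aux_steps_s3 {M : DFAwtl Q V} {c d : Q × List V} (h : M.Steps c d) :
    ∃ k, M.StepsN c d k := by
  induction h using Relation.ReflTransGen.head_induction_on with
  | refl => exact ⟨0, StepsN.refl _⟩
  | head h _ ih =>
    obtain ⟨k, hk⟩ := ih
    rcases h with h | h
    · exact ⟨k, StepsN.seq h hk⟩
    · exact ⟨k + 1, StepsN.jump h hk⟩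

theorem aux_steps' {M : DFAwtl Q V} {c d : Q × List V} {k : ℕ} (h : M.StepsN c d k) :
    M.Steps c d := by
  induction h with
  | refl c => exact Relation.ReflTransGen.refl
  | seq h1 _ ih => exact Relation.ReflTransGen.head (Or.inl h1) ih
  | jump h1 _ ih => exact Relation.ReflTransGen.head (Or.inr h1) ih

theorem aux_seqN {M : DFAwtl Q V} {c d : Q × List V} (h : M.SeqSteps c d) :
    M.StepsN c d 0 := by
  induction h using Relation.ReflTransGen.head_induction_on with
  | refl => exact StepsN.refl _
  | head h _ ih => exact StepsN.seq h ih

theorem aux_ext {M : DFAwtl Q V} {c d : Q × List V} {k : ℕ} (t : List V)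
    (h : M.StepsN c d k) : M.StepsN (c.1, c.2 ++ t) (d.1, d.2 ++ t) k := by
  induction h with
  | refl c => exact StepsN.refl _
  | seq h1 _ ih =>
    obtain ⟨b, h2, h3⟩ := h1
    refine StepsN.seq ?_ ih
    exact ⟨b, by simp [h2], h3⟩
  | jump h1 _ ih =>
    obtain ⟨x, y, b, h2, h3, h4, h5, h6⟩ := h1
    refine StepsN.jump ?_ ih
    exact ⟨x, y ++ t, b, h2, by simp [h3], by simp [h4], h5, h6⟩

theorem aux_ppd {M : DFAwtl Q V} {p s : Q} {a b : V} {w : List V}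
    (h : M.ProperPrefixDeficient p a (b :: w)) (hs : M.delta p b = some s) :
    M.ProperPrefixDeficient s a w := by
  intro y' r h1 h2 h3
  refine h (b :: y') r ?_ ?_ ?_
  · simpa using h1
  · simpa using h2
  · simpa [deltaStar, hs] using h3

theorem aux_jump {M : DFAwtl Q V} {r : Q} {a : V} (t w : List V) : ∀ {p : Q},
    M.SeqSteps (p, w) (r, []) → M.ProperPrefixDeficient p a w →
    M.StepsN (p, a :: (w ++ t)) (r, a :: t) w.length := by
  induction w with
  | nil =>
    intro p h _
    rcases Relation.ReflTransGen.cases_head h with h | ⟨⟨s, v⟩, ⟨c, h1, h2⟩, h3⟩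
    · simp at h; subst h; exact StepsN.refl _
    · simp at h1
  | cons b w ih =>
    intro p h hd
    obtain ⟨s, hs, h⟩ := aux_seq_cons h
    refine StepsN.jump (c' := (s, a :: (w ++ t)))
      ⟨[a], w ++ t, b, by simp, by simp, by simp, hs, ?_⟩ (ih h (aux_ppd hd hs))
    intro c hc
    simp only [List.mem_singleton] at hc
    subst hc
    exact hd [] p (by simp) (by simp) (by simp [deltaStar])

theorem aux_split_s3 {M : DFAwtl Q V} {p s s' : Q} {b b' : V} {y y' : List V} (x : List V) :
    ∀ {x' : List V}, x ++ b :: y = x' ++ b' :: y' → M.delta p b = some s →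
    M.delta p b' = some s' → (∀ c ∈ x, M.delta p c = none) →
    (∀ c ∈ x', M.delta p c = none) → x = x' ∧ b = b' ∧ y = y' := by
  induction x with
  | nil =>
    intro x' h h1 h2 h3 h4
    cases x' with
    | nil => simpa using h
    | cons c x' =>
      simp only [List.nil_append, List.cons_append, List.cons.injEq] at h
      have := h4 c (by simp)
      rw [← h.1, h1] at this
      simp at this
  | cons d x ih =>
    intro x' h h1 h2 h3 h4
    cases x' with
    | nil =>
      simp only [List.nil_append, List.cons_append, List.cons.injEq] at h
      have := h3 d (by simp)
      rw [h.1, h2] at this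
      simp at this
    | cons c x' =>
      simp only [List.cons_append, List.cons.injEq] at h
      obtain ⟨rfl, h⟩ := h
      obtain ⟨rfl, rfl, rfl⟩ := ih h h1 h2 (fun c hc => h3 c (by simp [hc]))
        (fun c hc => h4 c (by simp [hc]))
      simp

/-- Uniform description of a step with an explicit skipped prefix. -/
theorem aux_det_seq {M : DFAwtl Q V} {c d e : Q × List V}
    (h : M.SeqStep c d) (h' : M.SeqStep c e) : d = e := by
  obtain ⟨b, h1, h2⟩ := h
  obtain ⟨b', h1', h2'⟩ := h'
  obtain ⟨d1, d2⟩ := d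
  obtain ⟨e1, e2⟩ := e
  rw [h1] at h1'
  simp only [List.cons.injEq] at h1'
  obtain ⟨rfl, h3⟩ := h1'
  rw [h2] at h2'
  simp_all

theorem aux_det_jump {M : DFAwtl Q V} {c d e : Q × List V}
    (h : M.JumpStep c d) (h' : M.JumpStep c e) : d = e := by
  obtain ⟨x, y, b, h0, h1, h2, h3, h4⟩ := h
  obtain ⟨x', y', b', h0', h1', h2', h3', h4'⟩ := h'
  obtain ⟨rfl, rfl, rfl⟩ := aux_split_s3 x (h1.symm.trans h1') h3 h3' h4 h4'
  rw [h3] at h3'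
  exact Prod.ext (by simpa using h3') (h2.trans h2'.symm)

theorem aux_det_mix {M : DFAwtl Q V} {c d e : Q × List V}
    (h : M.SeqStep c d) (h' : M.JumpStep c e) : False := by
  obtain ⟨b, h1, h2⟩ := h
  obtain ⟨x', y', b', h0', h1', h2', h3', h4'⟩ := h'
  exact h0' (aux_split_s3 [] (h1.symm.trans h1') h2 h3' (by simp) h4').1.symm

theorem aux_unique_s3 {M : DFAwtl Q V} {c d : Q × List V} {k : ℕ} (h : M.StepsN c d k) :
    ∀ {e : Q × List V} {l : ℕ}, d.2 = [] → e.2 = [] → M.StepsN c e l → k = l := by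
  induction h with
  | refl c =>
    intro e l hd he h'
    cases h' with
    | refl => rfl
    | seq h1 _ => obtain ⟨b, h1, _⟩ := h1; simp [hd] at h1
    | jump h1 _ => obtain ⟨x, y, b, _, h1, _⟩ := h1; simp [hd] at h1
  | seq h1 _ ih =>
    intro e l hd he h'
    cases h' with
    | refl => obtain ⟨b, h1, _⟩ := h1; simp [he] at h1
    | seq h2 h3 =>
      have := aux_det_seq h1 h2
      subst this
      exact ih hd he h3
    | jump h2 _ => exact (aux_det_mix h1 h2).elim
  | jump h1 _ ih =>
    intro e l hd he h'
    cases h' with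
    | refl => obtain ⟨x, y, b, _, h1, _⟩ := h1; simp [he] at h1
    | seq h2 _ => exact (aux_det_mix h2 h1).elim
    | jump h2 h3 =>
      have := aux_det_jump h1 h2
      subst this
      rw [ih hd he h3]

theorem aux_iter {M : DFAwtl Q V} {q : Q} {a : V} {x : List V} (t : List V)
    (hcyc : M.SeqSteps (q, x) (q, [])) (hd : M.ProperPrefixDeficient q a x) (n : ℕ) :
    M.StepsN (q, a :: ((List.replicate n x).flatten ++ t)) (q, a :: t) (n * x.length) := by
  induction n with
  | zero => simpa using StepsN.refl _
  | succ n ih =>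
    have := aux_trans (aux_jump ((List.replicate n x).flatten ++ t) x hcyc hd) ih
    rw [Nat.succ_mul, Nat.add_comm (n * x.length)]
    simpa [List.replicate_succ] using this

end DFAwtl

/-- Claim 2: under the stated conditions on `(q,a)`, the words
`u·a·xⁿ·y·z` are accepted with at least `n` jumps; hence `JC_M` is not
constant-bounded. -/
theorem stmt_3 {Q V : Type*} [Fintype Q] [Fintype V] (M : DFAwtl Q V)
    (q f : Q) (a : V) (u x y z : List V)
    (ha : M.delta q a = none)
    (hu : M.Steps (M.start, u) (q, []))
    (hx : x ≠ []) (hcyc : M.SeqSteps (q, x) (q, []))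
    (hxdef : M.PrefixDeficient q a x)
    (hay : a ∉ y) (hf : f ∈ M.accept)
    (hyz : M.SeqSteps (q, y ++ a :: z) (f, []))
    (hydef : M.ProperPrefixDeficient q a y) :
    (∀ n : ℕ, 1 ≤ n →
      u ++ a :: ((List.replicate n x).flatten ++ y ++ z) ∈ M.lang ∧
        n ≤ M.jc (u ++ a :: ((List.replicate n x).flatten ++ y ++ z))) ∧
      ¬ M.ConstBounded := by
  have key : ∀ n : ℕ, 1 ≤ n →
      u ++ a :: ((List.replicate n x).flatten ++ y ++ z) ∈ M.lang ∧
        n ≤ M.jc (u ++ a :: ((List.replicate n x).flatten ++ y ++ z)) := by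
    intro n _
    obtain ⟨k, hk⟩ := DFAwtl.aux_steps_s3 hu
    obtain ⟨s, hs1, hs2⟩ := DFAwtl.aux_seq_append y hyz
    have h1 := DFAwtl.aux_ext (a :: ((List.replicate n x).flatten ++ y ++ z)) hk
    have h2 := DFAwtl.aux_iter (y ++ z) hcyc
      (fun x' p h _ h' => hxdef x' p h h') n
    have h3 := DFAwtl.aux_jump z y hs1 hydef
    have h4 := DFAwtl.aux_seqN hs2
    rw [← List.append_assoc] at h2
    have h5 := DFAwtl.aux_trans h1 (DFAwtl.aux_trans h2 (DFAwtl.aux_trans h3 h4))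
    refine ⟨⟨f, hf, DFAwtl.aux_steps' h5⟩, ?_⟩
    refine le_csInf ⟨_, f, hf, h5⟩ ?_
    rintro l ⟨g, _, hl⟩
    rw [← DFAwtl.aux_unique_s3 h5 rfl rfl hl]
    have : 0 < x.length := List.length_pos_iff.mpr hx
    have := Nat.le_mul_of_pos_right n this
    omega
  refine ⟨key, ?_⟩
  rintro ⟨c, hc⟩
  obtain ⟨h1, h2⟩ := key (c + 1) (by omega)
  have := hc _ h1
  omega
end

section
/- For every DFAwtl M, if the jump complexity JC_M is not bounded by a constant, then JC_M is not sublinear: there is no DFAwtl M such that JC_M(n)=f(n) for a function f:ℕ→ℕ that is not constant-bounded yet satisfies lim_{n→∞} f(n)/n = 0. Equivalently, for every DFAwtl M, either JC_M is constant-bounded or there exists a constant c>0 such that JC_M(n) ≥ c·n for infinitely many n in the domain of JC_M. -/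
-- end preamble

namespace DFAwtl

variable {Q V : Type*}

def PPath (M : DFAwtl Q V) : Q → List V → Q → Prop
  | q, [], q' => q = q'
  | q, b :: v, q' => ∃ q1, M.delta q b = some q1 ∧ PPath M q1 v q'

def DPath (M : DFAwtl Q V) (a : V) : Q → List V → Q → Prop
  | q, [], q' => q = q'
  | q, b :: v, q' => M.delta q a = none ∧ ∃ q1, M.delta q b = some q1 ∧ DPath M a q1 v q'

theorem DPath.toP {M : DFAwtl Q V} {a : V} : ∀ {v : List V} {q q' : Q},
    M.DPath a q v q' → M.PPath q v q'
  | [], _, _, h => h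
  | _ :: _, _, _, ⟨_, q1, h1, h2⟩ => ⟨q1, h1, DPath.toP h2⟩

theorem StepsN.trans' {M : DFAwtl Q V} {c c' c'' : Q × List V} {m n : ℕ}
    (h : M.StepsN c c' m) (h' : M.StepsN c' c'' n) : M.StepsN c c'' (m + n) := by
  induction h with
  | refl c => simpa using h'
  | seq s _ ih => exact .seq s (ih h')
  | jump s _ ih =>
    have := StepsN.jump s (ih h')
    rwa [Nat.add_right_comm]

theorem StepsN.toSteps {M : DFAwtl Q V} {c c' : Q × List V} {m : ℕ}
    (h : M.StepsN c c' m) : M.Steps c c' := by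
  induction h with
  | refl c => exact .refl
  | seq s _ ih => exact .head (Or.inl s) ih
  | jump s _ ih => exact .head (Or.inr s) ih

theorem Steps.toN {M : DFAwtl Q V} {c c' : Q × List V}
    (h : M.Steps c c') : ∃ m, M.StepsN c c' m := by
  induction h using Relation.ReflTransGen.head_induction_on with
  | refl => exact ⟨0, .refl _⟩
  | head s _ ih =>
    obtain ⟨m, ih⟩ := ih
    rcases s with s | s
    · exact ⟨m, .seq s ih⟩
    · exact ⟨m + 1, .jump s ih⟩

theorem Steps.path {M : DFAwtl Q V} {c c' : Q × List V}
    (h : M.Steps c c') : ∃ u, M.PPath c.1 u c'.1 := by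
  induction h using Relation.ReflTransGen.head_induction_on with
  | refl => exact ⟨[], rfl⟩
  | head s _ ih =>
    obtain ⟨u, ih⟩ := ih
    rcases s with ⟨a, _, h⟩ | ⟨x, y, a, _, _, _, h, _⟩
    · exact ⟨a :: u, _, h, ih⟩
    · exact ⟨a :: u, _, h, ih⟩

theorem PPath.steps {M : DFAwtl Q V} : ∀ {u : List V} {q q' : Q} (t : List V),
    M.PPath q u q' → M.StepsN (q, u ++ t) (q', t) 0
  | [], _, _, _, h => by cases h; exact .refl _
  | b :: _, _, _, t, ⟨_, h1, h2⟩ => .seq ⟨b, rfl, h1⟩ (PPath.steps t h2)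

theorem DPath.steps {M : DFAwtl Q V} {a : V} : ∀ {u : List V} {q q' : Q} (t : List V),
    M.DPath a q u q' → M.StepsN (q, a :: (u ++ t)) (q', a :: t) u.length
  | [], _, _, _, h => by cases h; exact .refl _
  | b :: u, _, _, t, ⟨h0, _, h1, h2⟩ =>
    .jump (c' := (_, a :: (u ++ t)))
      ⟨[a], u ++ t, b, by simp, rfl, rfl, h1, by simpa using h0⟩ (DPath.steps t h2)

theorem lead {M : DFAwtl Q V} {a : V} {c c' : Q × List V} (h : M.Steps c c') :
    ∀ r, c.2 = a :: r →
    (∃ v r', c'.2 = a :: r' ∧ M.DPath a c.1 v c'.1) ∨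
    (∃ v q1 q2 z, M.DPath a c.1 v q1 ∧ M.delta q1 a = some q2 ∧ M.PPath q2 z c'.1) := by
  induction h using Relation.ReflTransGen.head_induction_on with
  | refl => exact fun r hr => Or.inl ⟨[], r, hr, rfl⟩
  | @head d e s hs ih =>
    intro r hr
    rcases s with ⟨b, hb, h⟩ | ⟨x, y, b, hx, h1, h2, h, hd⟩
    · rw [hr] at hb
      obtain ⟨rfl, rfl⟩ := List.cons.inj hb
      obtain ⟨z, hz⟩ := Steps.path hs
      exact Or.inr ⟨[], d.1, e.1, z, rfl, h, hz⟩
    · obtain _ | ⟨a', x⟩ := x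
      · exact absurd rfl hx
      rw [hr] at h1
      obtain ⟨rfl, _⟩ := List.cons.inj h1
      have ha := hd a (by simp)
      rcases ih (x ++ y) h2 with ⟨v, r', e1, e2⟩ | ⟨v, q1, q2, z, e1, e2, e3⟩
      · exact Or.inl ⟨b :: v, r', e1, ha, _, h, e2⟩
      · exact Or.inr ⟨b :: v, q1, q2, z, ⟨ha, _, h, e1⟩, e2, e3⟩

theorem split_unique {M : DFAwtl Q V} {q p p' : Q} : ∀ {x x' y y' : List V} {a a' : V},
    x ++ a :: y = x' ++ a' :: y' → M.delta q a = some p → M.delta q a' = some p' →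
    (∀ b ∈ x, M.delta q b = none) → (∀ b ∈ x', M.delta q b = none) →
    x = x' ∧ a = a' ∧ y = y'
  | [], [], _, _, _, _, h, _, _, _, _ => by simpa using h
  | [], b :: x', _, _, _, _, h, h1, _, _, h4 => by
    have := h4 b (by simp)
    simp at h
    simp [h.1, this] at h1
  | b :: x, [], _, _, _, _, h, _, h2, h3, _ => by
    have := h3 b (by simp)
    simp at h
    simp [← h.1, this] at h2
  | b :: x, b' :: x', y, y', a, a', h, h1, h2, h3, h4 => by
    simp only [List.cons_append, List.cons.injEq] at h
    have := split_unique h.2 h1 h2 (fun b hb => h3 b (by simp [hb]))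
      (fun b hb => h4 b (by simp [hb]))
    simp [this, h.1]

theorem StepsN.unique {M : DFAwtl Q V} {c c' : Q × List V} {k : ℕ} (h : M.StepsN c c' k) :
    c'.2 = [] → ∀ {d : Q × List V} {k' : ℕ}, M.StepsN c d k' → d.2 = [] → k = k' := by
  induction h with
  | refl c =>
    intro hc d k' h' hd
    cases h' with
    | refl => rfl
    | seq s _ => obtain ⟨a, h, _⟩ := s; simp [hc] at h
    | jump s _ => obtain ⟨x, y, a, _, h, _⟩ := s; simp [hc] at h
  | @seq c c1 c2 n s _ ih =>
    intro hc d k' h' hd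
    obtain ⟨a, h1, h2⟩ := s
    cases h' with
    | refl => simp [hd] at h1
    | @seq _ e _ _ s' t =>
      obtain ⟨a', h1', h2'⟩ := s'
      rw [h1] at h1'
      obtain ⟨rfl, e2⟩ := List.cons.inj h1'
      rw [h2] at h2'
      have : c1 = e := Prod.ext (Option.some.inj h2') e2
      subst this
      exact ih hc t hd
    | jump s' t =>
      obtain ⟨x, y, a', hx, h1', _, h2', h3⟩ := s'
      rw [h1] at h1'
      exact absurd (split_unique (x := []) h1' h2 h2' (by simp) h3).1.symm hx
  | @jump c c1 c2 n s _ ih =>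
    intro hc d k' h' hd
    obtain ⟨x, y, a, hx, h1, h4, h2, h3⟩ := s
    cases h' with
    | refl => simp [hd] at h1
    | seq s' t =>
      obtain ⟨a', h1', h2'⟩ := s'
      rw [h1] at h1'
      exact absurd (split_unique (x' := []) h1' h2 h2' h3 (by simp)).1 hx
    | @jump _ e _ _ s' t =>
      obtain ⟨x', y', a', hx', h1', h4', h2', h3'⟩ := s'
      rw [h1] at h1'
      obtain ⟨rfl, rfl, rfl⟩ := split_unique h1' h2 h2' h3 h3'
      rw [h2] at h2'
      have : c1 = e := Prod.ext (Option.some.inj h2') (h4.trans h4'.symm)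
      subst this
      rw [ih hc t hd]

theorem StepsN.le_length {M : DFAwtl Q V} {c c' : Q × List V} {k : ℕ} (h : M.StepsN c c' k) :
    k ≤ c.2.length := by
  induction h with
  | refl c => simp
  | seq s _ ih => obtain ⟨a, h1, h2⟩ := s; simp [h1]; omega
  | jump s _ ih =>
    obtain ⟨x, y, a, hx, h1, h4, h2, h3⟩ := s
    simp [h1]; simp [h4] at ih; omega

theorem AcceptsIn.jc_eq {M : DFAwtl Q V} {w : List V} {k : ℕ} (h : M.AcceptsIn w k) :
    M.jc w = k := by
  have : {k | M.AcceptsIn w k} = {k} := by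
    ext k'
    constructor
    · rintro ⟨f', _, h'⟩
      obtain ⟨f, _, h⟩ := h
      exact h'.unique rfl h rfl
    · rintro rfl
      exact h
  rw [jc, this, csInf_singleton]

theorem lang_accepts {M : DFAwtl Q V} {w : List V} (h : w ∈ M.lang) : ∃ k, M.AcceptsIn w k := by
  obtain ⟨f, hf, h⟩ := h
  obtain ⟨k, h⟩ := Steps.toN h
  exact ⟨k, f, hf, h⟩

theorem AcceptsIn.mem {M : DFAwtl Q V} {w : List V} {k : ℕ} (h : M.AcceptsIn w k) :
    w ∈ M.lang := by
  obtain ⟨f, hf, h⟩ := h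
  exact ⟨f, hf, h.toSteps⟩

theorem AcceptsIn.le_JC {M : DFAwtl Q V} {w : List V} {k : ℕ} (h : M.AcceptsIn w k) :
    k ≤ M.JC w.length := by
  apply le_csSup
  · refine ⟨w.length, ?_⟩
    rintro j ⟨w', hw', hl, rfl⟩
    obtain ⟨k', hk'⟩ := lang_accepts hw'
    rw [hk'.jc_eq]
    obtain ⟨f, _, h'⟩ := hk'
    rw [← hl]
    exact h'.le_length
  · exact ⟨w, h.mem, rfl, h.jc_eq⟩

def Rep (M : DFAwtl Q V) (c c' : Q × List V) : Prop :=
  ∃ p w1 c1 w2, M.Steps c (p, w1) ∧ M.JumpStep (p, w1) c1 ∧ M.Steps c1 (p, w2) ∧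
    M.Steps (p, w2) c'

theorem Rep.head {M : DFAwtl Q V} {c d c' : Q × List V} (s : M.Step c d) (h : M.Rep d c') :
    M.Rep c c' := by
  obtain ⟨p, w1, c1, w2, h1, h2⟩ := h
  exact ⟨p, w1, c1, w2, .head s h1, h2⟩

theorem pigeon {M : DFAwtl Q V} {c c' : Q × List V} {k : ℕ} (h : M.StepsN c c' k) :
    ¬ M.Rep c c' → ∃ S : Finset Q, S.card = k ∧ ∀ p ∈ S, ∃ w, M.Steps c (p, w) ∧
      M.Steps (p, w) c' := by
  classical
  induction h with
  | refl c => exact fun _ => ⟨∅, by simp⟩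
  | seq s _ ih =>
    intro hr
    obtain ⟨S, hS, h⟩ := ih (fun h => hr (h.head (Or.inl s)))
    refine ⟨S, hS, fun p hp => ?_⟩
    obtain ⟨w, h1, h2⟩ := h p hp
    exact ⟨w, .head (Or.inl s) h1, h2⟩
  | @jump c d c' n s t ih =>
    intro hr
    obtain ⟨S, hS, h⟩ := ih (fun h => hr (h.head (Or.inr s)))
    have hc : c.1 ∉ S := by
      intro hp
      obtain ⟨w, h1, h2⟩ := h _ hp
      exact hr ⟨c.1, c.2, d, w, .refl, s, h1, h2⟩
    refine ⟨insert c.1 S, by rw [Finset.card_insert_of_notMem hc, hS], fun p hp => ?_⟩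
    rcases Finset.mem_insert.1 hp with rfl | hp
    · exact ⟨c.2, .refl, .head (Or.inr s) t.toSteps⟩
    · obtain ⟨w, h1, h2⟩ := h p hp
      exact ⟨w, .head (Or.inr s) h1, h2⟩

def wpow (x : List V) : ℕ → List V
  | 0 => []
  | m + 1 => x ++ wpow x m

theorem wpow_length (x : List V) : ∀ m, (wpow x m).length = m * x.length
  | 0 => by simp [wpow]
  | m + 1 => by simp [wpow, wpow_length x m]; ring

theorem iter {M : DFAwtl Q V} {p : Q} {x : List V} {j : ℕ} {pre : List V}
    (h : ∀ t, M.StepsN (p, pre ++ (x ++ t)) (p, pre ++ t) j) (t : List V) :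
    ∀ m, M.StepsN (p, pre ++ (wpow x m ++ t)) (p, pre ++ t) (m * j)
  | 0 => by simpa [wpow] using StepsN.refl (M := M) (p, pre ++ t)
  | m + 1 => by
    have := (h (wpow x m ++ t)).trans' (iter h t m)
    rw [Nat.succ_mul, Nat.add_comm (m * j) j]
    simpa [wpow] using this

theorem pump {M : DFAwtl Q V} {w : List V} {f : Q} (hf : f ∈ M.accept)
    (h : M.Rep (M.start, w) (f, [])) :
    ∃ C : ℕ, ∀ m : ℕ, ∃ w k, M.AcceptsIn w k ∧ m ≤ k ∧ w.length ≤ C * (m + 1) := by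
  obtain ⟨p, w1, c1, w2, h1, hj, h2, h3⟩ := h
  obtain ⟨u, hu⟩ := Steps.path h1
  obtain ⟨x, y, b, hx, e1, e2, hb, hd⟩ := hj
  obtain _ | ⟨a, x⟩ := x
  · exact absurd rfl hx
  have ha := hd a (by simp)
  rcases lead h2 (x ++ y) e2 with ⟨v, r', g1, g2⟩ | ⟨v, q1, q2, z, g1, g2, g3⟩
  · have hD : M.DPath a p (b :: v) p := ⟨ha, _, hb, g2⟩
    rcases lead h3 r' g1 with ⟨_, _, g, _⟩ | ⟨v', q1, q2, z, k1, k2, k3⟩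
    · simp at g
    have hz : M.StepsN (q2, z) (f, []) 0 := by simpa using k3.steps []
    refine ⟨u.length + 1 + (b :: v).length + v'.length + z.length, fun m =>
      ⟨u ++ ([a] ++ (wpow (b :: v) m ++ (v' ++ z))), _,
        ⟨f, hf, (hu.steps _).trans' ((iter (pre := [a])
          (fun t => hD.steps t) (v' ++ z) m).trans' ((k1.steps z).trans'
            (StepsN.seq (c' := (q2, z)) ⟨a, rfl, k2⟩ hz)))⟩, ?_, ?_⟩⟩
    · simp; nlinarith
    · simp [wpow_length]; nlinarith
  · have hD : M.DPath a p (b :: v) q1 := ⟨ha, _, hb, g1⟩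
    obtain ⟨u', hu'⟩ := Steps.path h3
    have hz : M.StepsN (p, u') (f, []) 0 := by simpa using hu'.steps []
    have key : ∀ t, M.StepsN (p, [] ++ ((a :: (b :: v ++ z)) ++ t)) (p, [] ++ t)
        (v.length + 1) := by
      intro t
      have := (hD.steps (z ++ t)).trans' (StepsN.seq (c' := (q2, z ++ t)) ⟨a, rfl, g2⟩
        (g3.steps t))
      simpa using this
    refine ⟨u.length + u'.length + (a :: (b :: v ++ z)).length, fun m =>
      ⟨u ++ ([] ++ (wpow (a :: (b :: v ++ z)) m ++ u')), _,
        ⟨f, hf, (hu.steps _).trans' ((iter key u' m).trans' hz)⟩, ?_, ?_⟩⟩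
    · simp; nlinarith
    · simp [wpow_length]; nlinarith

end DFAwtl


/-- for every DFAwtl, either `JC_M` is constant-bounded or there exists
`c > 0` such that `JC_M(n) ≥ c·n` for infinitely many `n` in the domain of `JC_M`;
in particular `JC_M` cannot be unbounded yet sublinear. -/
theorem stmt_6 {Q V : Type*} [Fintype Q] [Fintype V] (M : DFAwtl Q V) :
    M.ConstBounded ∨
      ∃ c : ℝ, 0 < c ∧ ∀ N : ℕ, ∃ n ≥ N,
        (∃ w ∈ M.lang, w.length = n) ∧ c * (n : ℝ) ≤ (M.JC n : ℝ) := by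
  by_cases hR : ∃ f ∈ M.accept, ∃ w, M.Rep (M.start, w) (f, [])
  · right
    obtain ⟨f, hf, w, h⟩ := hR
    obtain ⟨C, hC⟩ := DFAwtl.pump hf h
    refine ⟨1 / (2 * (C + 1)), by positivity, fun N => ?_⟩
    obtain ⟨w, k, hk, hm, hl⟩ := hC (N + 1)
    have hle : k ≤ w.length := by
      obtain ⟨_, _, h⟩ := hk
      exact h.le_length
    refine ⟨w.length, by omega, ⟨w, hk.mem, rfl⟩, ?_⟩
    have hJ := hk.le_JC
    have : w.length ≤ 2 * (C + 1) * M.JC w.length := by nlinarith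
    have : (w.length : ℝ) ≤ 2 * (C + 1) * M.JC w.length := by exact_mod_cast this
    rw [one_div, inv_mul_le_iff₀ (by positivity)]
    exact this
  · left
    refine ⟨Fintype.card Q, fun w hw => ?_⟩
    obtain ⟨k, hk⟩ := DFAwtl.lang_accepts hw
    rw [hk.jc_eq]
    obtain ⟨f, hf, h⟩ := hk
    obtain ⟨S, hS, _⟩ := DFAwtl.pigeon h (fun h => hR ⟨f, hf, w, h⟩)
    rw [← hS]
    exact S.card_le_univ
end

section
/- Let M be the DFAwtl over V={a,b} with states Q={q₀,q₁}, initial state q₀, final states F={q₀}, and partial transition function given by δ(q₀,a)=q₁ and δ(q₁,b)=q₀ (δ(q₀,b) and δ(q₁,a) undefined). Then L(M) = {w∈{a,b}* : |w|_a = |w|_b}, where |w|_x denotes the number of occurrences of the letter x in w. -/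
-- end preamble

/-- The DFAwtl over `{a,b}` (with `a = 0`, `b = 1`) with states `q₀ = 0`, `q₁ = 1`,
initial and final state `q₀`, `δ(q₀,a) = q₁`, `δ(q₁,b) = q₀`, and `δ(q₀,b)`,
`δ(q₁,a)` undefined. -/
def exampleM : DFAwtl (Fin 2) (Fin 2) :=
  { delta := ![![some 1, none], ![none, some 0]]
    start := 0
    accept := {0} }

theorem exM_delta (q a : Fin 2) :
    exampleM.delta q a = if a = q then some (1 - q) else none := by
  fin_cases q <;> fin_cases a <;> rfl

theorem exM_step_mk (q : Fin 2) (w : List (Fin 2)) (h : q ∈ w) :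
    exampleM.Step (q, w) (1 - q, w.erase q) := by
  obtain ⟨x, y, hx, hw, he⟩ := List.exists_erase_eq h
  rw [he, hw]
  cases x with
  | nil => exact Or.inl ⟨q, rfl, by simp [exM_delta]⟩
  | cons c x =>
    refine Or.inr ⟨c :: x, y, q, by simp, rfl, rfl, by simp [exM_delta], ?_⟩
    intro b hb
    rw [exM_delta, if_neg]
    rintro rfl
    exact hx hb

theorem exM_step_inv {c c' : Fin 2 × List (Fin 2)} (h : exampleM.Step c c') :
    c'.1 = 1 - c.1 ∧ ∃ x y, c.2 = x ++ c.1 :: y ∧ c'.2 = x ++ y := by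
  rcases h with ⟨a, h1, h2⟩ | ⟨x, y, a, -, h1, h2, h3, -⟩
  · rw [exM_delta] at h2
    split_ifs at h2 with ha
    subst ha
    exact ⟨(Option.some.inj h2).symm, [], c'.2, h1, rfl⟩
  · rw [exM_delta] at h3
    split_ifs at h3 with ha
    subst ha
    exact ⟨(Option.some.inj h3).symm, x, y, h1, h2⟩

theorem exM_sound {c : Fin 2 × List (Fin 2)} (h : exampleM.Steps c (0, [])) :
    c.2.count 0 + c.1.val = c.2.count 1 := by
  induction h using Relation.ReflTransGen.head_induction_on with
  | refl => simp
  | head h _ ih =>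
    obtain ⟨h1, x, y, h2, h3⟩ := exM_step_inv h
    rw [h1, h3] at ih
    rw [h2]
    rename_i a c _
    rcases a with ⟨q, w⟩
    fin_cases q <;> simp [List.count_append, List.count_cons] at ih ⊢ <;> omega

theorem exM_complete (n : ℕ) : ∀ w : List (Fin 2), w.count 0 = n → w.count 1 = n →
    exampleM.Steps (0, w) (0, []) := by
  induction n with
  | zero =>
    intro w h0 h1
    have : w = [] := by
      rw [List.count_eq_zero] at h0 h1
      refine List.eq_nil_iff_forall_not_mem.2 fun a ha => ?_
      fin_cases a
      · exact h0 ha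
      · exact h1 ha
    subst this
    exact Relation.ReflTransGen.refl
  | succ n ih =>
    intro w h0 h1
    have m0 : (0 : Fin 2) ∈ w := List.count_pos_iff.1 (by omega)
    have m1 : (1 : Fin 2) ∈ w.erase 0 :=
      (List.mem_erase_of_ne (by decide)).2 (List.count_pos_iff.1 (by omega))
    refine Relation.ReflTransGen.head (exM_step_mk 0 w m0)
      (Relation.ReflTransGen.head (exM_step_mk 1 _ m1) (ih _ ?_ ?_))
    · rw [List.count_erase_of_ne (by decide), List.count_erase_self]; omega
    · rw [List.count_erase_self, List.count_erase_of_ne (by decide)]; omega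

/-- the automaton above accepts exactly the words with equally many
`a`'s and `b`'s. -/
theorem stmt_14 :
    exampleM.lang = {w : List (Fin 2) | w.count 0 = w.count 1} := by
  ext w
  constructor
  · rintro ⟨f, hf, h⟩
    have hf0 : f = 0 := hf
    subst hf0
    have := exM_sound h
    simpa [exampleM] using this
  · intro h
    exact ⟨0, rfl, exM_complete _ w rfl (Eq.symm h)⟩
end

section
/- Let M be the DFAwtl over V={a,b} with states Q={q₀,q₁}, initial state q₀, final states F={q₀}, and partial transition function given by δ(q₀,a)=q₁ and δ(q₁,b)=q₀ (δ(q₀,b) and δ(q₁,a) undefined). Then for every n≥0: jc_M(bⁿaⁿ)=n, for every word w∈L(M) of length 2n one has 0 ≤ jc_M(w) ≤ n, and JC_M(2n)=n (JC_M is undefined on odd lengths). -/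
theorem ex_d00 : exampleM.delta 0 0 = some 1 := rfl
theorem ex_d01 : exampleM.delta 0 1 = none := rfl
theorem ex_d10 : exampleM.delta 1 0 = none := rfl
theorem ex_d11 : exampleM.delta 1 1 = some 0 := rfl

theorem ex_some {q a p : Fin 2} (h : exampleM.delta q a = some p) :
    (q = 0 ∧ a = 0 ∧ p = 1) ∨ (q = 1 ∧ a = 1 ∧ p = 0) := by
  revert h; revert q a p; unfold exampleM; decide

theorem ex_none {q a : Fin 2} (h : exampleM.delta q a = none) :
    (q = 0 ∧ a = 1) ∨ (q = 1 ∧ a = 0) := by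
  revert h; revert q a; unfold exampleM; decide

theorem ex_upper {c d : Fin 2 × List (Fin 2)} {k : ℕ} (h : exampleM.StepsN c d k) :
    d = (0, []) →
    (c.1 = 0 → Even c.2.length ∧ 2 * k ≤ c.2.length) ∧
    (c.1 = 1 → Odd c.2.length ∧ 2 * k ≤ c.2.length + 1 ∧
      (∀ t, c.2 = 1 :: t → 2 * k + 1 ≤ c.2.length)) := by
  induction h with
  | refl c => rintro rfl; simp
  | @seq c c' c'' n hs _ ih =>
    intro hd
    obtain ⟨i0, i1⟩ := ih hd
    obtain ⟨q, w⟩ := c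
    obtain ⟨p, w'⟩ := c'
    obtain ⟨a, h1, h2⟩ := hs
    simp only at *
    subst h1
    rcases ex_some h2 with ⟨rfl, rfl, rfl⟩ | ⟨rfl, rfl, rfl⟩
    · obtain ⟨j1, j2, j3⟩ := i1 rfl
      refine ⟨fun _ => ⟨?_, ?_⟩, by simp⟩
      · simpa using j1.add_one
      · simpa using j2
    · obtain ⟨j1, j2⟩ := i0 rfl
      refine ⟨by simp, fun _ => ⟨?_, ?_, fun t _ => ?_⟩⟩
      · simpa using j1.add_one
      · simp; omega
      · simp; omega
  | @jump c c' c'' n hs _ ih =>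
    intro hd
    obtain ⟨i0, i1⟩ := ih hd
    obtain ⟨q, w⟩ := c
    obtain ⟨p, w'⟩ := c'
    obtain ⟨x, y, a, hx, h1, h3, h2, h4⟩ := hs
    simp only at *
    subst h1 h3
    obtain ⟨b, x, rfl⟩ := List.exists_cons_of_ne_nil hx
    have hb := ex_none (h4 b (by simp))
    rcases ex_some h2 with ⟨rfl, rfl, rfl⟩ | ⟨rfl, rfl, rfl⟩
    · obtain ⟨j1, j2, j3⟩ := i1 rfl
      have hb1 : b = 1 := by simpa using hb
      subst hb1
      have := j3 (x ++ y) rfl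
      simp only [List.cons_append, List.length_cons, List.length_append] at *
      refine ⟨fun _ => ⟨?_, ?_⟩, by simp⟩
      · simpa [add_assoc] using j1.add_one
      · omega
    · obtain ⟨j1, j2⟩ := i0 rfl
      have hb1 : b = 0 := by simpa using hb
      subst hb1
      simp only [List.cons_append, List.length_cons, List.length_append] at *
      refine ⟨by simp, fun _ => ⟨?_, ?_, fun t ht => ?_⟩⟩
      · simpa [add_assoc] using j1.add_one
      · omega
      · simp at ht

theorem ex_lower {c d : Fin 2 × List (Fin 2)} {k : ℕ} (h : exampleM.StepsN c d k) :
    d = (0, []) → c.2.Pairwise (· ≥ ·) →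
    (c.1 = 0 → c.2.count 1 ≤ k) ∧ (c.1 = 1 → c.2.count 1 ≤ k + 1) := by
  induction h with
  | refl c => rintro rfl; simp
  | @seq c c' c'' n hs _ ih =>
    intro hd hp
    obtain ⟨q, w⟩ := c
    obtain ⟨p, w'⟩ := c'
    obtain ⟨a, h1, h2⟩ := hs
    simp only at *
    subst h1
    obtain ⟨i0, i1⟩ := ih hd hp.of_cons
    rcases ex_some h2 with ⟨rfl, rfl, rfl⟩ | ⟨rfl, rfl, rfl⟩
    · refine ⟨fun _ => ?_, by simp⟩
      have : (1 : Fin 2) ∉ (0 :: w') := by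
        intro hm
        rcases List.mem_cons.1 hm with h | h
        · exact absurd h (by decide)
        · exact absurd (List.rel_of_pairwise_cons hp h) (by decide)
      rw [List.count_eq_zero_of_not_mem this]; omega
    · have := i0 rfl
      refine ⟨by simp, fun _ => ?_⟩
      simp; omega
  | @jump c c' c'' n hs _ ih =>
    intro hd hp
    obtain ⟨q, w⟩ := c
    obtain ⟨p, w'⟩ := c'
    obtain ⟨x, y, a, hx, h1, h3, h2, h4⟩ := hs
    simp only at *
    subst h1 h3
    obtain ⟨i0, i1⟩ := ih hd (hp.sublist (by simp))
    rcases ex_some h2 with ⟨rfl, rfl, rfl⟩ | ⟨rfl, rfl, rfl⟩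
    · have := i1 rfl
      refine ⟨fun _ => ?_, by simp⟩
      simp [List.count_cons] at *; omega
    · have := i0 rfl
      refine ⟨by simp, fun _ => ?_⟩
      simp [List.count_cons] at *; omega

theorem ex_acc (n : ℕ) :
    exampleM.StepsN (0, List.replicate n 1 ++ List.replicate n 0) (0, []) n := by
  induction n with
  | zero => exact .refl _
  | succ n ih =>
    refine .jump (c' := (1, List.replicate (n+1) 1 ++ List.replicate n 0)) ?_ (.seq ?_ ih)
    · refine ⟨List.replicate (n+1) 1, List.replicate n 0, 0, by simp, by simp [List.replicate_succ], rfl,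
        rfl, ?_⟩
      intro b hb
      rw [List.eq_of_mem_replicate hb]; rfl
    · exact ⟨1, by simp [List.replicate_succ], rfl⟩

theorem ex_toSteps {c d : Fin 2 × List (Fin 2)} {k : ℕ} (h : exampleM.StepsN c d k) :
    exampleM.Steps c d := by
  induction h with
  | refl c => exact .refl
  | seq hs _ ih => exact .head (Or.inl hs) ih
  | jump hs _ ih => exact .head (Or.inr hs) ih

theorem ex_ofSteps {c d : Fin 2 × List (Fin 2)} (h : exampleM.Steps c d) :
    ∃ k, exampleM.StepsN c d k := by
  induction h using Relation.ReflTransGen.head_induction_on with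
  | refl => exact ⟨0, .refl _⟩
  | head hs _ ih =>
    obtain ⟨k, hk⟩ := ih
    rcases hs with hs | hs
    · exact ⟨k, .seq hs hk⟩
    · exact ⟨k + 1, .jump hs hk⟩

theorem ex_accIff (w : List (Fin 2)) (k : ℕ) :
    exampleM.AcceptsIn w k ↔ exampleM.StepsN (0, w) (0, []) k := by
  simp [DFAwtl.AcceptsIn, exampleM]

theorem ex_lang (w : List (Fin 2)) (h : w ∈ exampleM.lang) :
    exampleM.StepsN (0, w) (0, []) (exampleM.jc w) := by
  obtain ⟨f, hf, hs⟩ := h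
  have hf : f = 0 := hf
  subst hf
  obtain ⟨k, hk⟩ := ex_ofSteps hs
  rw [← ex_accIff]
  exact Nat.sInf_mem (s := {k | exampleM.AcceptsIn w k}) ⟨k, (ex_accIff w k).2 hk⟩

theorem ex_mem (n : ℕ) : (List.replicate n 1 ++ List.replicate n 0) ∈ exampleM.lang :=
  ⟨0, rfl, ex_toSteps (ex_acc n)⟩

/-- for every `n`: `jc_M(bⁿaⁿ) = n`; every accepted word of length `2n`
has jump complexity at most `n` (and at least `0`); `JC_M(2n) = n`; and `JC_M` is
undefined on odd lengths, i.e. every accepted word has even length. -/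
theorem stmt_15 (n : ℕ) :
    exampleM.jc (List.replicate n 1 ++ List.replicate n 0) = n ∧
    (∀ w ∈ exampleM.lang, w.length = 2 * n → exampleM.jc w ≤ n) ∧
    exampleM.JC (2 * n) = n ∧
    (∀ w ∈ exampleM.lang, Even w.length) := by
  have h2 : ∀ w ∈ exampleM.lang, w.length = 2 * n → exampleM.jc w ≤ n := by
    intro w hw hl
    have := ((ex_upper (ex_lang w hw) rfl).1 rfl).2
    simp only at this
    omega
  have h1 : exampleM.jc (List.replicate n 1 ++ List.replicate n 0) = n := by
    apply le_antisymm (h2 _ (ex_mem n) (by simp; omega))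
    have := (ex_lower (ex_lang _ (ex_mem n)) rfl (by
      simp [List.pairwise_append, List.pairwise_replicate])).1 rfl
    simpa [List.count_replicate] using this
  refine ⟨h1, h2, ?_, fun w hw => ((ex_upper (ex_lang w hw) rfl).1 rfl).1⟩
  have hg : IsGreatest {k | ∃ w ∈ exampleM.lang, w.length = 2 * n ∧ exampleM.jc w = k} n :=
    ⟨⟨_, ex_mem n, by simp; omega, h1⟩, by rintro k ⟨w, hw, hl, rfl⟩; exact h2 w hw hl⟩
  exact hg.csSup_eq
end
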